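/- For every c > 0 there exist C > 0 and n₀ ∈ ℕ, with C depending only on c, such that for every n ≥ n₀, almost surely on the event {M_n > 1/27 − c/γ_n} one has |M_{n+1} − E[M_{n+1} | 𝔉_n]| < C/γ_n^{3/2}. -/

import Mathlib

open MeasureTheory ProbabilityTheory Filter Set Topology

noncomputable section

/-- `γ_n = γ₀ + 4 n`. -/
def rpsGamma (γ₀ : ℝ) (n : ℕ) : ℝ := γ₀ + 4 * n

/-- The increments to the (unnormalised) degrees of the three types
for each of the six possible transitions. -/
def rpsIncr : Fin 6 → ℝ × ℝ × ℝ
  | 0 => (4, 0, 0)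
  | 1 => (0, 4, 0)
  | 2 => (0, 0, 4)
  | 3 => (1, 3, 0)
  | 4 => (0, 1, 3)
  | 5 => (3, 0, 1)

/-- The conditional probability of each of the six possible transitions,
as a function of the current state `(x, y, z)`. -/
def rpsProb (i : Fin 6) (x y z : ℝ) : ℝ :=
  match i with
  | 0 => x ^ 2
  | 1 => y ^ 2
  | 2 => z ^ 2
  | 3 => 2 * x * y
  | 4 => 2 * y * z
  | 5 => 2 * z * x

/-- The rock–paper–scissors preferential attachment chain: an adapted process
`(X n, Y n, Z n)` with values in the simplex `Δ²`, deterministic strictly positive initial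
condition and, conditionally on `𝔉 n`, the six possible transitions have the prescribed
probabilities. -/
structure RPSChain {Ω : Type*} [MeasurableSpace Ω] (μ : Measure Ω) (γ₀ : ℝ) where
  F : Filtration ℕ ‹MeasurableSpace Ω›
  X : ℕ → Ω → ℝ
  Y : ℕ → Ω → ℝ
  Z : ℕ → Ω → ℝ
  adapted_X : Adapted F X
  adapted_Y : Adapted F Y
  adapted_Z : Adapted F Z
  nonneg_X : ∀ n ω, 0 ≤ X n ω
  nonneg_Y : ∀ n ω, 0 ≤ Y n ω
  nonneg_Z : ∀ n ω, 0 ≤ Z n ω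
  sum_eq_one : ∀ n ω, X n ω + Y n ω + Z n ω = 1
  init_X_pos : ∀ ω, 0 < X 0 ω
  init_Y_pos : ∀ ω, 0 < Y 0 ω
  init_Z_pos : ∀ ω, 0 < Z 0 ω
  init_X_const : ∀ ω ω', X 0 ω = X 0 ω'
  init_Y_const : ∀ ω ω', Y 0 ω = Y 0 ω'
  init_Z_const : ∀ ω ω', Z 0 ω = Z 0 ω'
  step : ∀ (n : ℕ) (i : Fin 6),
    μ[Set.indicator
        {ω | X (n+1) ω = (rpsGamma γ₀ n * X n ω + (rpsIncr i).1) / rpsGamma γ₀ (n+1) ∧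
             Y (n+1) ω = (rpsGamma γ₀ n * Y n ω + (rpsIncr i).2.1) / rpsGamma γ₀ (n+1) ∧
             Z (n+1) ω = (rpsGamma γ₀ n * Z n ω + (rpsIncr i).2.2) / rpsGamma γ₀ (n+1)}
        (fun _ => (1 : ℝ)) | F n]
      =ᵐ[μ] fun ω => rpsProb i (X n ω) (Y n ω) (Z n ω)

theorem rps_s_le (x y z : ℝ) (hx : 0 ≤ x) (hy : 0 ≤ y) (hz : 0 ≤ z) (h : x + y + z = 1) :
    (x - 1/3)^2 + (y - 1/3)^2 + (z - 1/3)^2 ≤ 18 * (1/27 - x*y*z) := by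
  obtain rfl : z = 1 - x - y := by linarith
  nlinarith [mul_nonneg hx (sq_nonneg (y - (1 - x - y))), mul_nonneg hy (sq_nonneg (x - (1 - x - y))),
    mul_nonneg hz (sq_nonneg (x - y))]

theorem rps_pair (x y d : ℝ) (hu : |x - 1/3| ≤ d) (hv : |y - 1/3| ≤ d)
    (hx : 0 ≤ x) (hx1 : x ≤ 1) : |x * y - 1/9| ≤ 2 * d := by
  have e : x * y - 1/9 = x * (y - 1/3) + (1/3) * (x - 1/3) := by ring
  have hd : 0 ≤ d := (abs_nonneg _).trans hu
  rw [e]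
  refine (abs_add_le _ _).trans ?_
  rw [abs_mul, abs_mul, abs_of_nonneg hx, abs_of_nonneg (by norm_num : (0:ℝ) ≤ 1/3)]
  nlinarith [mul_le_mul hx1 hv (abs_nonneg _) (by norm_num)]

set_option maxHeartbeats 1000000 in
theorem rps_det (x y z g g' k r c a1 a2 a3 : ℝ) (hx : 0 ≤ x) (hy : 0 ≤ y) (hz : 0 ≤ z)
    (h : x + y + z = 1) (hr : 1 ≤ r) (hk : 0 ≤ k) (hg : g = r^2) (hg' : g ≤ g')
    (hkc : k^2 = 18 * c) (hM : x*y*z > 1/27 - c/g)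
    (h1 : 0 ≤ a1) (h2 : 0 ≤ a2) (h3 : 0 ≤ a3) (hs : a1 + a2 + a3 = 4) (hp : a1*a2*a3 = 0)
    (hq1 : a1*a2 + a2*a3 + a3*a1 ≤ 3) :
    |(g*x+a1)/g' * ((g*y+a2)/g') * ((g*z+a3)/g') - (g^3*(x*y*z) + 4/9*g^2)/g'^3|
      ≤ (8*k+3)/r^3 := by
  have hr0 : 0 < r := by linarith
  have hg0 : 0 < g := by rw [hg]; positivity
  have hg'0 : 0 < g' := by linarith
  have hs2 := rps_s_le x y z hx hy hz h
  have hkr : (k/r)^2 = 18 * (c/g) := by rw [div_pow, hkc, hg]; ring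
  have hd0 : 0 ≤ k/r := by positivity
  have hu : |x - 1/3| ≤ k/r := abs_le_of_sq_le_sq (by linarith [sq_nonneg (y-1/3), sq_nonneg (z-1/3)]) hd0
  have hv : |y - 1/3| ≤ k/r := abs_le_of_sq_le_sq (by linarith [sq_nonneg (x-1/3), sq_nonneg (z-1/3)]) hd0
  have hw : |z - 1/3| ≤ k/r := abs_le_of_sq_le_sq (by linarith [sq_nonneg (y-1/3), sq_nonneg (x-1/3)]) hd0
  have p1 := abs_le.1 (rps_pair y z _ hv hw hy (by linarith))
  have p2 := abs_le.1 (rps_pair x z _ hu hw hx (by linarith))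
  have p3 := abs_le.1 (rps_pair x y _ hu hv hx (by linarith))
  set L := a1*(y*z-1/9) + a2*(x*z-1/9) + a3*(x*y-1/9) with hL
  set Q := a1*a2*z + a2*a3*x + a3*a1*y with hQ
  have hLb : |L| ≤ 8*(k/r) := by
    rw [abs_le]; constructor
    · nlinarith [mul_le_mul_of_nonneg_left p1.1 h1, mul_le_mul_of_nonneg_left p2.1 h2, mul_le_mul_of_nonneg_left p3.1 h3]
    · nlinarith [mul_le_mul_of_nonneg_left p1.2 h1, mul_le_mul_of_nonneg_left p2.2 h2, mul_le_mul_of_nonneg_left p3.2 h3]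
  have m12 := mul_nonneg h1 h2
  have m23 := mul_nonneg h2 h3
  have m31 := mul_nonneg h3 h1
  have hQ0 : 0 ≤ Q := by positivity
  have hQ3 : Q ≤ 3 := by
    nlinarith [mul_le_mul_of_nonneg_left (by linarith : z ≤ 1) m12,
      mul_le_mul_of_nonneg_left (by linarith : x ≤ 1) m23, mul_le_mul_of_nonneg_left (by linarith : y ≤ 1) m31]
  have e : (g*x+a1)/g' * ((g*y+a2)/g') * ((g*z+a3)/g') - (g^3*(x*y*z) + 4/9*g^2)/g'^3
      = (g^2*L + g*Q)/g'^3 := by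
    have : 4/9*g^2 = (a1+a2+a3)/9*g^2 := by rw [hs]
    rw [this, hL, hQ, div_mul_div_comm, div_mul_div_comm,
      show g'*g'*g' = g'^3 by ring, ← sub_div]
    congr 1
    linear_combination hp
  rw [e, abs_div, abs_of_pos (by positivity : 0 < g'^3)]
  have hnum : |g^2*L + g*Q| ≤ (8*k+3)*r^3 := by
    refine (abs_add_le _ _).trans ?_
    rw [abs_mul, abs_mul, abs_of_pos hg0, abs_of_nonneg hQ0, abs_of_pos (by positivity : 0 < g^2)]
    have a : g^2*|L| ≤ 8*k*r^3 := by
      calc g^2*|L| ≤ g^2*(8*(k/r)) := by gcongr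
        _ = 8*k*r^3 := by rw [hg]; field_simp
    have b : g*Q ≤ 3*r^3 := by
      calc g*Q ≤ g*3 := by gcongr
        _ ≤ 3*r^3 := by rw [hg]; nlinarith [mul_le_mul_of_nonneg_left hr (sq_nonneg r)]
    linarith
  calc |g^2*L + g*Q| / g'^3 ≤ (8*k+3)*r^3 / g^3 := by gcongr
    _ = (8*k+3)/r^3 := by rw [hg]; field_simp

theorem rps_ae_step {Ω : Type*} [MeasurableSpace Ω] (μ : Measure Ω) [IsProbabilityMeasure μ]
    (γ₀ : ℝ) (hγ₀ : 2 ≤ γ₀) (ch : RPSChain μ γ₀) (n : ℕ) :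
    ∀ᵐ ω ∂μ, ∃ i : Fin 6,
      ch.X (n+1) ω = (rpsGamma γ₀ n * ch.X n ω + (rpsIncr i).1) / rpsGamma γ₀ (n+1) ∧
      ch.Y (n+1) ω = (rpsGamma γ₀ n * ch.Y n ω + (rpsIncr i).2.1) / rpsGamma γ₀ (n+1) ∧
      ch.Z (n+1) ω = (rpsGamma γ₀ n * ch.Z n ω + (rpsIncr i).2.2) / rpsGamma γ₀ (n+1) := by
  have hg : rpsGamma γ₀ (n+1) ≠ 0 := by
    unfold rpsGamma; positivity
  have mX : ∀ n, Measurable (ch.X n) := fun n => ((ch.adapted_X n).mono (ch.F.le n) le_rfl)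
  have mY : ∀ n, Measurable (ch.Y n) := fun n => ((ch.adapted_Y n).mono (ch.F.le n) le_rfl)
  have mZ : ∀ n, Measurable (ch.Z n) := fun n => ((ch.adapted_Z n).mono (ch.F.le n) le_rfl)
  let S : Fin 6 → Set Ω := fun i =>
    {ω | ch.X (n+1) ω = (rpsGamma γ₀ n * ch.X n ω + (rpsIncr i).1) / rpsGamma γ₀ (n+1) ∧
      ch.Y (n+1) ω = (rpsGamma γ₀ n * ch.Y n ω + (rpsIncr i).2.1) / rpsGamma γ₀ (n+1) ∧
      ch.Z (n+1) ω = (rpsGamma γ₀ n * ch.Z n ω + (rpsIncr i).2.2) / rpsGamma γ₀ (n+1)}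
  have hSm : ∀ i, MeasurableSet (S i) := fun i =>
    (measurableSet_eq_fun (mX _) (((mX n).const_mul _).add_const _ |>.div_const _)).inter
      ((measurableSet_eq_fun (mY _) (((mY n).const_mul _).add_const _ |>.div_const _)).inter
        (measurableSet_eq_fun (mZ _) (((mZ n).const_mul _).add_const _ |>.div_const _)))
  have hdis : Pairwise (fun i j => Disjoint (S i) (S j)) := by
    intro i j hij
    rw [Set.disjoint_left]
    rintro ω ⟨a1, a2, a3⟩ ⟨b1, b2, b3⟩
    rw [a1, div_left_inj' hg, add_right_inj] at b1
    rw [a2, div_left_inj' hg, add_right_inj] at b2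
    rw [a3, div_left_inj' hg, add_right_inj] at b3
    apply hij
    clear a1 a2 a3 hij
    fin_cases i <;> fin_cases j <;> first | rfl | (norm_num [rpsIncr] at b1; done) | (norm_num [rpsIncr] at b2; done) | (norm_num [rpsIncr] at b3; done)
  have hSi : ∀ i, μ.real (S i) = ∫ ω, rpsProb i (ch.X n ω) (ch.Y n ω) (ch.Z n ω) ∂μ := by
    intro i
    rw [← integral_congr_ae (ch.step n i), integral_condExp (ch.F.le n)]
    exact (integral_indicator_one (hSm i)).symm
  have hint : ∀ i ∈ (Finset.univ : Finset (Fin 6)),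
      Integrable (fun ω => rpsProb i (ch.X n ω) (ch.Y n ω) (ch.Z n ω)) μ :=
    fun i _ => (integrable_congr (ch.step n i)).1 integrable_condExp
  have hU : μ.real (⋃ i, S i) = 1 := by
    rw [measureReal_iUnion_fintype hdis hSm, Finset.sum_congr rfl (fun i _ => hSi i),
      ← integral_finsetSum _ hint]
    have : ∀ ω, ∑ i, rpsProb i (ch.X n ω) (ch.Y n ω) (ch.Z n ω) = 1 := by
      intro ω
      have := ch.sum_eq_one n ω
      simp only [Fin.sum_univ_six, rpsProb]
      linear_combination (ch.X n ω + ch.Y n ω + ch.Z n ω + 1) * this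
    simp [this]
  have hU' : μ (⋃ i, S i) = 1 := by
    rw [measureReal_def] at hU
    exact (ENNReal.toReal_eq_one_iff _).1 hU
  have := (prob_compl_eq_zero_iff (MeasurableSet.iUnion hSm)).2 hU'
  have h2 : ∀ᵐ ω ∂μ, ω ∈ ⋃ i, S i := this
  filter_upwards [h2] with ω hω
  exact Set.mem_iUnion.1 hω

/-- For every `c > 0` there are `C > 0` (depending only on `c`) and `n₀` such that for all
`n ≥ n₀`, almost surely on the event `{M_n > 1/27 - c/γ_n}` one has
`|M_{n+1} - E[M_{n+1} | 𝔉_n]| < C / γ_n^{3/2}`. -/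
theorem rps_variation_near_centre.{u} (γ₀ : ℝ) (hγ₀ : 2 ≤ γ₀) :
    ∀ c : ℝ, 0 < c → ∃ C : ℝ, 0 < C ∧ ∃ n₀ : ℕ,
      ∀ (Ω : Type u) (_ : MeasurableSpace Ω) (μ : Measure Ω), IsProbabilityMeasure μ →
        ∀ ch : RPSChain μ γ₀, ∀ n ≥ n₀, ∀ᵐ ω ∂μ,
          ch.X n ω * ch.Y n ω * ch.Z n ω > 1/27 - c / rpsGamma γ₀ n →
          abs (ch.X (n+1) ω * ch.Y (n+1) ω * ch.Z (n+1) ω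
              - (μ[fun ω' => ch.X (n+1) ω' * ch.Y (n+1) ω' * ch.Z (n+1) ω' | ch.F n]) ω)
            < C / (rpsGamma γ₀ n) ^ ((3 : ℝ) / 2) := by
  intro c hc
  have hk0 := Real.sqrt_nonneg (18*c)
  refine ⟨2*(8*√(18*c)+3)+1, by positivity, 0, ?_⟩
  intro Ω _ μ _ ch n _
  have mX : ∀ n, Measurable[ch.F n] (ch.X n) := ch.adapted_X
  have mY : ∀ n, Measurable[ch.F n] (ch.Y n) := ch.adapted_Y
  have mZ : ∀ n, Measurable[ch.F n] (ch.Z n) := ch.adapted_Z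
  have mM : ∀ n, Measurable[ch.F n] (fun ω => ch.X n ω * ch.Y n ω * ch.Z n ω) :=
    fun n => ((mX n).mul (mY n)).mul (mZ n)
  have iM : ∀ n, Integrable (fun ω => ch.X n ω * ch.Y n ω * ch.Z n ω) μ := by
    intro n
    refine Integrable.of_bound ((mM n).mono (ch.F.le n) le_rfl).aestronglyMeasurable 1 ?_
    refine Eventually.of_forall fun ω => ?_
    have hx := ch.nonneg_X n ω
    have hy := ch.nonneg_Y n ω
    have hz := ch.nonneg_Z n ω
    have hs := ch.sum_eq_one n ω
    rw [Real.norm_of_nonneg (by positivity)]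
    exact mul_le_one₀ (mul_le_one₀ (by linarith) hy (by linarith)) hz (by linarith)
  have hgn : 2 ≤ rpsGamma γ₀ n := by
    have : (0:ℝ) ≤ n := n.cast_nonneg
    unfold rpsGamma; linarith
  have hgg : rpsGamma γ₀ n ≤ rpsGamma γ₀ (n+1) := by
    unfold rpsGamma; push_cast; linarith
  have hr1 : 1 ≤ √(rpsGamma γ₀ n) := by rw [Real.one_le_sqrt]; linarith
  have hr2 : rpsGamma γ₀ n = √(rpsGamma γ₀ n) ^ 2 := (Real.sq_sqrt (by linarith)).symm
  have hr3 : rpsGamma γ₀ n ^ ((3:ℝ)/2) = √(rpsGamma γ₀ n) ^ 3 := by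
    rw [Real.sqrt_eq_rpow, ← Real.rpow_natCast, ← Real.rpow_mul (by linarith)]; norm_num
  rw [hr3]
  set K := (8*√(18*c)+3) / √(rpsGamma γ₀ n) ^ 3 with hK
  let M : Ω → ℝ := fun ω => ch.X (n+1) ω * ch.Y (n+1) ω * ch.Z (n+1) ω
  let b : Ω → ℝ := fun ω => (rpsGamma γ₀ n ^ 3 * (ch.X n ω * ch.Y n ω * ch.Z n ω)
    + 4/9 * rpsGamma γ₀ n ^ 2) / rpsGamma γ₀ (n+1) ^ 3
  let A : Set Ω := {ω | 1/27 - c / rpsGamma γ₀ n < ch.X n ω * ch.Y n ω * ch.Z n ω}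
  have hA : MeasurableSet[ch.F n] A := measurableSet_lt measurable_const (mM n)
  have mb : Measurable[ch.F n] b := (((mM n).const_mul _).add_const _).div_const _
  have ib : Integrable b μ := (((iM n).const_mul _).add (integrable_const _)).div_const _
  have key : ∀ᵐ ω ∂μ, ω ∈ A → |M ω - b ω| ≤ K := by
    filter_upwards [rps_ae_step μ γ₀ hγ₀ ch n] with ω ⟨i, h1, h2, h3⟩ hω
    simp only [M, b]
    rw [h1, h2, h3]
    apply rps_det _ _ _ _ _ _ _ c _ _ _ (ch.nonneg_X n ω) (ch.nonneg_Y n ω) (ch.nonneg_Z n ω)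
      (ch.sum_eq_one n ω) hr1 hk0 hr2 hgg (Real.sq_sqrt (by positivity)) hω
    all_goals fin_cases i <;> norm_num [rpsIncr]
  have hK0 : 0 ≤ K := by positivity
  have bd : ∀ᵐ ω ∂μ, |(A.indicator (M - b)) ω| ≤ (⟨K, hK0⟩ : NNReal) := by
    filter_upwards [key] with ω h
    by_cases hω : ω ∈ A
    · simpa [hω] using h hω
    · simpa [hω] using hK0
  have bd2 := ae_bdd_condExp_of_ae_bdd (m := ch.F n) bd
  have e1 := condExp_indicator (μ := μ) ((iM (n+1)).sub ib) hA
  have e2 := condExp_sub (μ := μ) (iM (n+1)) ib (ch.F n)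
  rw [condExp_of_stronglyMeasurable (ch.F.le n) mb.stronglyMeasurable ib] at e2
  filter_upwards [key, bd2, e1, e2] with ω k1 k2 k3 k4 hω
  have hωA : ω ∈ A := hω
  have k2' : |(μ[A.indicator (M - b) | ch.F n]) ω| ≤ K := k2
  have k3' : (μ[A.indicator (M - b) | ch.F n]) ω = (μ[M | ch.F n]) ω - b ω := by
    refine Eq.trans k3 ?_
    rw [Set.indicator_of_mem hωA]
    exact k4
  rw [k3'] at k2'
  have k1' := k1 hωA
  have hfin : |M ω - (μ[M | ch.F n]) ω| ≤ 2 * K := by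
    rw [abs_le] at *
    constructor <;> linarith [k1'.1, k1'.2, k2'.1, k2'.2]
  refine lt_of_le_of_lt hfin ?_
  rw [hK, ← mul_div_assoc]
  gcongr
  linarith
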